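/- arXiv:1203.2236 — 6 statements merged into one kernel-verified Lean document; each statement's English description precedes it below -/
import Mathlib

section
/- Let S be a complete c-semiring, Σ an alphabet, and A : List Σ → S a formal power series. Consider the deterministic weighted automaton M_A whose state set is the quotient of List Σ by ≡_A, with transition [u]·σ = [u ++ [σ]], initial state [ε], and output F([u]) = A(u). Then: (a) the transition map and output map of M_A are well-defined and M_A recognizes A, i.e. A(w) = F(δ*([ε], w)) for all words w; and (b) for every deterministic weighted automaton (Q, δ, q₀, F') recognizing A, if δ*(q₀, u) = δ*(q₀, v) then u ≡_A v; consequently the map sending δ*(q₀, u) to the class [u] is a well-defined surjection from the set of states reachable from q₀ onto the set of equivalence classes of ≡_A, so the number of equivalence classes of ≡_A is at most the cardinality of Q. -/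
/-!
The class of a word is built up one letter at a time by the transitions of `M_A`, so reading `u`
from `[w]` leads to `[w ++ u]` (`foldl_MAdelta`); taking `w = ε` and applying the output map gives
`A u`. For an arbitrary automaton recognizing `A`, the weight `A (u ++ w)` depends only on the state
reached by `u` and on `w`, so words reaching the same state are `≡_A`-equivalent
(`eqA_of_foldl_eq`). Hence sending a reachable state to the class of any word reaching it is a
well-defined surjection, and a section of it embeds the classes into the state set.
-/

/-- A complete c-semiring: a complete lattice with a commutative monoid
multiplication distributing over arbitrary suprema, whose unit is the top element.
Addition is join, zero is `⊥`, infinitary sums are suprema. -/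
class CompleteCSemiring (S : Type*) extends CompleteLattice S, CommMonoid S where
  mul_sSup : ∀ (a : S) (s : Set S), a * sSup s = ⨆ b ∈ s, a * b
  one_eq_top : (1 : S) = ⊤

namespace FPS

open Classical
noncomputable section

variable {S : Type*} [CompleteCSemiring S] {α : Type*}

/-- Cauchy product of formal power series. -/
def cauchy (A B : List α → S) : List α → S :=
  fun w => ⨆ (u : List α) (v : List α) (_ : u ++ v = w), A u * B v

/-- Left quotient of `A` by the series `X`. -/
def lquot (X A : List α → S) : List α → S := fun v => ⨆ u : List α, X u * A (u ++ v)

/-- Right quotient of `A` by the series `Y`. -/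
def rquot (A Y : List α → S) : List α → S := fun v => ⨆ u : List α, A (v ++ u) * Y u

/-- Left residual `X \ A`. -/
def lres (X A : List α → S) : List α → S := sSup {Z | cauchy X Z ≤ A}

/-- Right residual `A / Y`. -/
def rres (A Y : List α → S) : List α → S := sSup {Z | cauchy Z Y ≤ A}

/-- Residual in the semiring `S`: `a ⇨ b`. -/
def resid (a b : S) : S := sSup {x | a * x ≤ b}

/-- Inclusion degree of the series `f` into `g`. -/
def incl (f g : List α → S) : S := ⨅ u : List α, resid (f u) (g u)

/-- A word viewed as a series: `1` at `u` and `⊥` elsewhere. -/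
def wordSeries (u : List α) : List α → S := fun w => if w = u then 1 else ⊥

/-- Reversal of a series. -/
def rev (A : List α → S) : List α → S := fun w => A w.reverse

/-- Extended transition map of a weighted automaton. -/
def deltaStar {Q : Type*} (δ : Q → α → Q → S) : Q → List α → Q → S
  | q, [], p => ⨆ _ : q = p, 1
  | q, a :: w, p => ⨆ r : Q, δ q a r * deltaStar δ r w p

/-- Behaviour of a weighted automaton. -/
def behavior {Q : Type*} (δ : Q → α → Q → S) (I F : Q → S) : List α → S :=
  fun w => ⨆ (p : Q) (q : Q), I p * deltaStar δ p w q * F q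

/-- Past of a state of a weighted automaton. -/
def past {Q : Type*} (δ : Q → α → Q → S) (I : Q → S) (q : Q) : List α → S :=
  fun w => ⨆ p : Q, I p * deltaStar δ p w q

/-- Future of a state of a weighted automaton. -/
def fut {Q : Type*} (δ : Q → α → Q → S) (F : Q → S) (q : Q) : List α → S :=
  fun w => ⨆ p : Q, deltaStar δ q w p * F p

/-- A series is DWA-regular if it is recognized by a finite deterministic
weighted automaton. -/
def DWARegular (A : List α → S) : Prop :=
  ∃ (Q : Type) (_ : Fintype Q) (δ : Q → α → Q) (q0 : Q) (F : Q → S),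
    ∀ w : List α, A w = F (w.foldl δ q0)

/-- A series is regular if it is the behaviour of a finite weighted automaton. -/
def Regular (A : List α → S) : Prop :=
  ∃ (Q : Type) (_ : Fintype Q) (δ : Q → α → Q → S) (I F : Q → S),
    behavior δ I F = A

/-- `(X, Y)` is a factorization of `A`. -/
def IsFactorization (A X Y : List α → S) : Prop :=
  cauchy X Y ≤ A ∧
    ∀ X' Y' : List α → S, X ≤ X' → Y ≤ Y' → cauchy X' Y' ≤ A → X' = X ∧ Y' = Y

/-- The set of factorizations of `A` (states of the universal weighted automaton). -/
def Fact (A : List α → S) := {p : (List α → S) × (List α → S) // IsFactorization A p.1 p.2}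

/-- Initial weights of the universal weighted automaton. -/
def JA (A : List α → S) (p : Fact A) : S := p.1.1 []

/-- Final weights of the universal weighted automaton. -/
def GA (A : List α → S) (p : Fact A) : S := p.1.2 []

/-- Transition weights of the universal weighted automaton. -/
def etaA (A : List α → S) (p : Fact A) (σ : α) (q : Fact A) : S :=
  incl (cauchy (cauchy p.1.1 (wordSeries [σ])) q.1.2) A

/-- The relation `u ≡_A v`. -/
def eqA (A : List α → S) : Setoid (List α) where
  r u v := ∀ w, A (u ++ w) = A (v ++ w)
  iseqv := ⟨fun _ _ => rfl, fun h w => (h w).symm, fun h1 h2 w => (h1 w).trans (h2 w)⟩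

end

end FPS

namespace FPS

noncomputable section

variable {S : Type*} [CompleteCSemiring S] {α : Type*}

/-- Transition map of the minimal DWA `M_A`: `[u] · σ = [u ++ [σ]]`. -/
def MAdelta (A : List α → S) : Quotient (eqA A) → α → Quotient (eqA A) :=
  letI := eqA A
  fun q σ => Quotient.map (fun u => u ++ [σ])
    (fun u v h w => by simpa [List.append_assoc] using h ([σ] ++ w)) q

/-- Output map of the minimal DWA `M_A`: `F [u] = A u`. -/
def MAF (A : List α → S) : Quotient (eqA A) → S :=
  letI := eqA A
  Quotient.lift A (fun u v h => by simpa using h ([] : List α))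

end

end FPS

namespace FPS

theorem foldl_MAdelta {S : Type*} [CompleteCSemiring S] {α : Type*} (A : List α → S)
    (u w : List α) :
    u.foldl (MAdelta A) (Quotient.mk (eqA A) w) = Quotient.mk (eqA A) (w ++ u) := by
  induction u generalizing w with
  | nil => simp
  | cons a u ih =>
    have h : MAdelta A (Quotient.mk (eqA A) w) a = Quotient.mk (eqA A) (w ++ [a]) := rfl
    rw [List.foldl_cons, h, ih, List.append_assoc, List.singleton_append]

theorem eqA_of_foldl_eq {S : Type*} [CompleteCSemiring S] {α Q : Type*} {A : List α → S}
    {δ : Q → α → Q} {q0 : Q} {F : Q → S} (hA : ∀ w : List α, A w = F (w.foldl δ q0))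
    {u v : List α} (h : u.foldl δ q0 = v.foldl δ q0) : (eqA A).r u v := by
  intro w
  rw [hA, hA, List.foldl_append, List.foldl_append, h]

end FPS

open FPS in
/-- (a) the minimal DWA `M_A` (whose transition and output maps are
well-defined by construction) recognizes `A`; (b) for every DWA recognizing `A`,
states reached by `≡_A`-inequivalent words are distinct; consequently the map
sending the state reached by `u` to the class of `u` is a well-defined surjection
from the reachable states onto the classes of `≡_A`, and there is an injection
from the classes of `≡_A` into the state set. -/
theorem minimal_dwa_theorem {S : Type*} [CompleteCSemiring S] {α : Type*}
    (A : List α → S) :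
    (∀ w : List α, A w = MAF A (w.foldl (MAdelta A) (Quotient.mk (eqA A) []))) ∧
    (∀ (Q : Type*) (δ : Q → α → Q) (q0 : Q) (F : Q → S),
      (∀ w : List α, A w = F (w.foldl δ q0)) →
      (∀ u v : List α, u.foldl δ q0 = v.foldl δ q0 → (eqA A).r u v) ∧
      (∃ g : {q : Q // ∃ u : List α, u.foldl δ q0 = q} → Quotient (eqA A),
        Function.Surjective g ∧
        ∀ u : List α, g ⟨u.foldl δ q0, u, rfl⟩ = Quotient.mk (eqA A) u) ∧
      (∃ f : Quotient (eqA A) → Q, Function.Injective f)) := by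
  refine ⟨fun w => ?_, fun Q δ q0 F hA => ?_⟩
  · rw [foldl_MAdelta]
    rfl
  have key : ∀ u v : List α, u.foldl δ q0 = v.foldl δ q0 → (eqA A).r u v :=
    fun _ _ h => eqA_of_foldl_eq hA h
  let g : {q : Q // ∃ u : List α, u.foldl δ q0 = q} → Quotient (eqA A) :=
    fun q => Quotient.mk (eqA A) q.2.choose
  have hg : ∀ u : List α, g ⟨u.foldl δ q0, u, rfl⟩ = Quotient.mk (eqA A) u := fun u =>
    Quotient.sound (key _ _ (Exists.choose_spec (⟨u, rfl⟩ : ∃ v, v.foldl δ q0 = u.foldl δ q0)))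
  have hsurj : Function.Surjective g := fun c => by
    induction c using Quotient.inductionOn with
    | _ u => exact ⟨_, hg u⟩
  exact ⟨key, ⟨g, hsurj, hg⟩, fun c => (Function.surjInv hsurj c).1,
    Subtype.val_injective.comp (Function.injective_surjInv hsurj)⟩
end

section
/- Let S be a complete c-semiring, Σ a finite alphabet, and A : List Σ → S a formal power series. The following are equivalent: (i) A is DWA-regular; (ii) the range of A is finite and for each r in the range of A the language {w | r ≤ A(w)} is regular; (iii) the range of A is finite and for each r in the range of A the language {w | A(w) = r} is regular; (iv) there exist k ∈ ℕ, values r₁, …, r_k ∈ S with each rᵢ ≠ ⊥, and pairwise disjoint regular languages L₁, …, L_k over Σ such that for every word w, A(w) = rᵢ if w ∈ Lᵢ and A(w) = ⊥ if w belongs to no Lᵢ; (v) the relation ≡_A has finitely many equivalence classes. -/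
namespace FPS

variable {S : Type*} {α : Type}

theorem DWARegular.finite_range {A : List α → S} (h : DWARegular A) : (Set.range A).Finite := by
  obtain ⟨Q, _, δ, q0, F, hF⟩ := h
  refine (Set.finite_range F).subset ?_
  rintro _ ⟨w, rfl⟩
  exact ⟨_, (hF w).symm⟩

theorem DWARegular.isRegular_preimage {A : List α → S} (h : DWARegular A) (T : Set S) :
    Language.IsRegular {w : List α | A w ∈ T} := by
  obtain ⟨Q, _, δ, q0, F, hF⟩ := h
  refine ⟨Q, inferInstance, ⟨δ, q0, F ⁻¹' T⟩, ?_⟩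
  ext w
  change F (w.foldl δ q0) ∈ T ↔ A w ∈ T
  rw [hF]

/-- If membership in finitely many regular languages determines the value of `A`, then `≡_A` has
finite index: the class of `u` is determined by the left quotients of these languages by `u`. -/
theorem finite_quotient_of_isRegular {A : List α → S} {ι : Type*} [Finite ι]
    (L : ι → Language α) (hL : ∀ i, (L i).IsRegular)
    (hA : ∀ u v : List α, (∀ i, u ∈ L i ↔ v ∈ L i) → A u = A v) :
    Finite (Quotient (eqA A)) := by
  have hfin : (Set.range fun (u : List α) i => (L i).leftQuotient u).Finite := by
    refine (Set.Finite.pi fun i => (hL i).finite_range_leftQuotient).subset ?_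
    rintro _ ⟨u, rfl⟩ i _
    exact ⟨u, rfl⟩
  have := hfin.to_subtype
  let g : Quotient (eqA A) → Set.range fun (u : List α) i => (L i).leftQuotient u :=
    fun q => ⟨_, q.out, rfl⟩
  refine Finite.of_injective g fun p q hpq => ?_
  rw [← p.out_eq, ← q.out_eq]
  refine Quotient.sound fun w => hA _ _ fun i => ?_
  have hi : (L i).leftQuotient p.out = (L i).leftQuotient q.out :=
    congrFun (congrArg Subtype.val hpq) i
  rw [← Language.mem_leftQuotient, hi, Language.mem_leftQuotient]

/-- The classes of `≡_A` form a deterministic weighted automaton recognizing `A`: reading `a` leads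
from the class of `u` to the class of `u ++ [a]`, and the class of `u` has final weight `A u`. -/
theorem dwaRegular_of_finite_quotient {A : List α → S} (h : Finite (Quotient (eqA A))) :
    DWARegular A := by
  let δ : Quotient (eqA A) → α → Quotient (eqA A) := fun q a =>
    Quotient.lift (fun u => Quotient.mk (eqA A) (u ++ [a]))
      (fun u v huv => Quotient.sound fun w => by
        have h : A (u ++ a :: w) = A (v ++ a :: w) := huv (a :: w)
        simpa using h) q
  let F : Quotient (eqA A) → S :=
    Quotient.lift A fun u v huv => by
      have h : A (u ++ []) = A (v ++ []) := huv []
      simpa using h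
  have key : ∀ w u : List α, w.foldl δ (Quotient.mk _ u) = Quotient.mk _ (u ++ w) := by
    intro w
    induction w with
    | nil => simp
    | cons a w ih =>
      intro u
      change w.foldl δ (Quotient.mk _ (u ++ [a])) = _
      rw [ih]
      simp
  refine ⟨_, Fintype.ofFinite _, δ, Quotient.mk _ [], F, fun w => ?_⟩
  rw [key]
  rfl

end FPS

open FPS in
/-- characterizations of DWA-regular series over a finite alphabet. -/
theorem dwa_regular_tfae {S : Type*} [CompleteCSemiring S] {α : Type} [Fintype α]
    (A : List α → S) :
    List.TFAE [
      DWARegular A,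
      (Set.range A).Finite ∧
        ∀ r ∈ Set.range A, Language.IsRegular {w : List α | r ≤ A w},
      (Set.range A).Finite ∧
        ∀ r ∈ Set.range A, Language.IsRegular {w : List α | A w = r},
      ∃ (k : ℕ) (r : Fin k → S) (L : Fin k → Language α),
        (∀ i, r i ≠ ⊥) ∧ (∀ i, (L i).IsRegular) ∧
        (∀ i j, i ≠ j → Disjoint (L i) (L j)) ∧
        (∀ w : List α, (∀ i, w ∈ L i → A w = r i) ∧ ((∀ i, w ∉ L i) → A w = ⊥)),
      Finite (Quotient (eqA A))
    ] := by
  tfae_have 1 → 2 := fun h => ⟨h.finite_range, fun r _ => h.isRegular_preimage (Set.Ici r)⟩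
  tfae_have 1 → 3 := fun h => ⟨h.finite_range, fun r _ => h.isRegular_preimage {r}⟩
  tfae_have 2 → 5 := by
    rintro ⟨hfin, hreg⟩
    have := hfin.to_subtype
    refine finite_quotient_of_isRegular (ι := Set.range A)
      (fun r => {w : List α | r.1 ≤ A w}) (fun r => hreg r r.2) fun u v h => ?_
    exact le_antisymm ((h ⟨A u, u, rfl⟩).1 (le_refl (A u))) ((h ⟨A v, v, rfl⟩).2 (le_refl (A v)))
  tfae_have 3 → 4 := by
    rintro ⟨hfin, hreg⟩
    have := (hfin.subset (Set.sdiff_subset (t := {⊥}))).to_subtype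
    obtain ⟨k, ⟨e⟩⟩ := Finite.exists_equiv_fin ↥(Set.range A \ {⊥})
    refine ⟨k, fun i => (e.symm i).1, fun i => {w : List α | A w = (e.symm i).1},
      fun i => (e.symm i).2.2, fun i => hreg _ (e.symm i).2.1, fun i j hij => ?_,
      fun w => ⟨fun i hi => hi, fun h => ?_⟩⟩
    · refine Set.disjoint_left.2 fun w (hi : A w = _) (hj : A w = _) => hij ?_
      exact e.symm.injective (Subtype.ext (hi.symm.trans hj))
    · by_contra hw
      refine h (e ⟨A w, ⟨w, rfl⟩, hw⟩) ?_
      change A w = (e.symm (e _)).1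
      rw [e.symm_apply_apply]
  tfae_have 4 → 5 := by
    rintro ⟨k, r, L, -, hreg, -, hA⟩
    refine finite_quotient_of_isRegular L hreg fun u v h => ?_
    by_cases hu : ∃ i, u ∈ L i
    · obtain ⟨i, hi⟩ := hu
      rw [(hA u).1 i hi, (hA v).1 i ((h i).1 hi)]
    · have hu' : ∀ i, u ∉ L i := fun i hi => hu ⟨i, hi⟩
      rw [(hA u).2 hu', (hA v).2 fun i hi => hu' i ((h i).2 hi)]
  tfae_have 5 → 1 := dwaRegular_of_finite_quotient
  tfae_finish
end

section
/- Let S be a complete c-semiring and Σ a finite alphabet. If A : List Σ → S is a regular series, then for all formal power series X, Y : List Σ → S, the left quotient X⁻¹A and the right quotient AY⁻¹ are regular series. -/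
namespace FPS

variable {S : Type*} [CompleteCSemiring S] {α : Type*}

theorem mul_iSup_dist {ι : Sort*} (a : S) (f : ι → S) : a * (⨆ i, f i) = ⨆ i, a * f i := by
  rw [iSup, CompleteCSemiring.mul_sSup, iSup_range]

theorem iSup_mul_dist {ι : Sort*} (a : S) (f : ι → S) : (⨆ i, f i) * a = ⨆ i, f i * a := by
  simp only [mul_comm _ a, mul_iSup_dist]

/-- The weight of reading `u ++ v` is the supremum over the intermediate state reached after
reading `u`. -/
theorem deltaStar_append {Q : Type*} (δ : Q → α → Q → S) (u v : List α) (p q : Q) :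
    deltaStar δ p (u ++ v) q = ⨆ r : Q, deltaStar δ p u r * deltaStar δ r v q := by
  induction u generalizing p with
  | nil => simp only [List.nil_append, deltaStar, iSup_mul_dist, one_mul, iSup_iSup_eq_right]
  | cons a u ih =>
    simp only [List.cons_append, deltaStar, ih, mul_iSup_dist, iSup_mul_dist, mul_assoc]
    exact iSup_comm

theorem behavior_lquot {Q : Type*} (δ : Q → α → Q → S) (I F : Q → S) (X : List α → S) :
    behavior δ (fun r => ⨆ u, X u * past δ I r u) F = lquot X (behavior δ I F) := by
  funext v
  simp only [behavior, lquot, past, deltaStar_append, mul_iSup_dist, iSup_mul_dist, mul_assoc]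
  apply le_antisymm
  · refine iSup_le fun r => iSup_le fun q => iSup_le fun u => iSup_le fun p => ?_
    exact le_iSup_of_le u <| le_iSup_of_le p <| le_iSup_of_le q <| le_iSup_of_le r le_rfl
  · refine iSup_le fun u => iSup_le fun p => iSup_le fun q => iSup_le fun r => ?_
    exact le_iSup_of_le r <| le_iSup_of_le q <| le_iSup_of_le u <| le_iSup_of_le p le_rfl

theorem behavior_rquot {Q : Type*} (δ : Q → α → Q → S) (I F : Q → S) (Y : List α → S) :
    behavior δ I (fun r => ⨆ u, fut δ F r u * Y u) = rquot (behavior δ I F) Y := by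
  funext v
  simp only [behavior, rquot, fut, deltaStar_append, mul_iSup_dist, iSup_mul_dist, mul_assoc]
  apply le_antisymm
  · refine iSup_le fun p => iSup_le fun r => iSup_le fun u => iSup_le fun q => ?_
    exact le_iSup_of_le u <| le_iSup_of_le p <| le_iSup_of_le q <| le_iSup_of_le r le_rfl
  · refine iSup_le fun u => iSup_le fun p => iSup_le fun q => iSup_le fun r => ?_
    exact le_iSup_of_le p <| le_iSup_of_le r <| le_iSup_of_le u <| le_iSup_of_le q le_rfl

end FPS

open FPS in
/-- regular series are closed under left and right quotients. -/
theorem regular_closed_under_quotients {S : Type*} [CompleteCSemiring S]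
    {α : Type} [Fintype α] (A : List α → S) (hA : Regular A) (X Y : List α → S) :
    Regular (lquot X A) ∧ Regular (rquot A Y) := by
  obtain ⟨Q, hQ, δ, I, F, rfl⟩ := hA
  exact ⟨⟨Q, hQ, δ, _, F, behavior_lquot δ I F X⟩, ⟨Q, hQ, δ, I, _, behavior_rquot δ I F Y⟩⟩
end

section
/- Let S be a complete c-semiring and Σ a finite alphabet. If A : List Σ → S is a DWA-regular series, then for all formal power series X, Y : List Σ → S, the left quotient X⁻¹A and the right quotient AY⁻¹ are DWA-regular series. -/
/-- In the automaton on `Q → Q` acting by post-composition, the word `v` carries `f` to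
`q ↦ f q · v`. -/
theorem foldl_postcomp {Q α : Type*} (δ : Q → α → Q) (v : List α) (f : Q → Q) (q : Q) :
    v.foldl (fun (g : Q → Q) a p => δ (g p) a) f q = v.foldl δ (f q) := by
  induction v generalizing f with
  | nil => rfl
  | cons a v ih => exact ih _

open FPS in
/-- DWA-regular series are closed under left and right quotients. -/
theorem dwa_regular_closed_under_quotients {S : Type*} [CompleteCSemiring S]
    {α : Type} [Fintype α] (A : List α → S) (hA : DWARegular A) (X Y : List α → S) :
    DWARegular (lquot X A) ∧ DWARegular (rquot A Y) := by
  classical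
  obtain ⟨Q, _, δ, q0, F, h⟩ := hA
  constructor
  · refine ⟨Q → Q, inferInstance, fun g a p => δ (g p) a, id,
      fun f => ⨆ u : List α, X u * F (f (u.foldl δ q0)), fun v => ?_⟩
    simp only [lquot, h, List.foldl_append, foldl_postcomp, id]
  · refine ⟨Q, inferInstance, δ, q0,
      fun q => ⨆ u : List α, F (u.foldl δ q) * Y u, fun v => ?_⟩
    simp only [rquot, h, List.foldl_append]
end

section
/- Let S be a complete c-semiring and Σ a finite nonempty alphabet. Then S is a finite set if and only if for every DWA-regular series A : List Σ → S, the set of left quotients of A by arbitrary series, {X⁻¹A | X : List Σ → S}, is finite. -/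
open FPS in
/-- `S` is finite iff for every DWA-regular series `A`, the set of
left quotients of `A` by arbitrary series is finite. -/
theorem finite_semiring_iff_quotient_sets_finite {S : Type*} [CompleteCSemiring S]
    {α : Type} [Fintype α] [Nonempty α] :
    Finite S ↔
      ∀ A : List α → S, DWARegular A →
        (Set.range (fun X : List α → S => lquot X A)).Finite := by
  constructor
  · rintro hS A ⟨Q, hQ, δ, q0, F, hA⟩
    -- The finitely many maps `(Q → Q) → S`, pulled back along `v ↦ (q ↦ v.foldl δ q)`.
    refine (Set.finite_range (fun (g : (Q → Q) → S) (v : List α) =>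
      g (fun q => v.foldl δ q))).subset ?_
    rintro _ ⟨X, rfl⟩
    refine ⟨fun t => ⨆ u : List α, X u * F (t (u.foldl δ q0)), ?_⟩
    funext v
    simp only [lquot, hA, List.foldl_append]
  · intro h
    have hfin := h (fun _ => 1) ⟨Unit, inferInstance, fun q _ => q, (), fun _ => 1, fun _ => rfl⟩
    have := hfin.to_subtype
    refine Finite.of_injective (fun s : S =>
      (⟨lquot (fun _ => s) (fun _ : List α => (1 : S)), fun _ => s, rfl⟩ :
        Set.range (fun X : List α → S => lquot X (fun _ => 1)))) ?_
    intro s t hst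
    simpa [lquot] using congrFun (congrArg Subtype.val hst) []
end

section
/- Let S be a complete c-semiring and Σ an alphabet. For all formal power series A, X, Y : List Σ → S and every word v, the residuals are given pointwise by residuals in S over quotients by words: (X\A)(v) = ⨅_{u} (X(u) ⇨ A(u ++ v)) and (A/Y)(v) = ⨅_{u} (Y(u) ⇨ A(v ++ u)), where the infima range over all words u. -/
namespace FPS

theorem mul_le_mul_left_of_le {S : Type*} [CompleteCSemiring S] (a : S) {x y : S}
    (h : x ≤ y) : a * x ≤ a * y := by
  have h1 := CompleteCSemiring.mul_sSup a {x, y}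
  rw [sSup_pair, sup_eq_right.mpr h] at h1
  rw [h1]
  exact le_iSup₂_of_le x (by simp) le_rfl

theorem mul_le_iff_le_resid {S : Type*} [CompleteCSemiring S] (a x b : S) :
    a * x ≤ b ↔ x ≤ resid a b := by
  constructor
  · intro h
    exact le_sSup h
  · intro h
    refine (mul_le_mul_left_of_le a h).trans ?_
    rw [resid, CompleteCSemiring.mul_sSup]
    exact iSup₂_le fun y hy => hy

theorem cauchy_le_iff {S : Type*} [CompleteCSemiring S] {α : Type*} (X Z A : List α → S) :
    cauchy X Z ≤ A ↔ ∀ u w : List α, X u * Z w ≤ A (u ++ w) := by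
  simp only [cauchy, Pi.le_def, iSup_le_iff]
  exact ⟨fun h u w => h _ u w rfl, fun h _ u w e => e ▸ h u w⟩

end FPS

open FPS in
/-- pointwise characterization of the residuals in terms of the
residual operation of `S` over quotients by words. -/
theorem residual_pointwise {S : Type*} [CompleteCSemiring S] {α : Type*}
    (A X Y : List α → S) (v : List α) :
    (lres X A v = ⨅ u : List α, resid (X u) (A (u ++ v))) ∧
    (rres A Y v = ⨅ u : List α, resid (Y u) (A (v ++ u))) := by
  have hl : {Z | cauchy X Z ≤ A} =
      Set.Iic (fun w => ⨅ u : List α, resid (X u) (A (u ++ w))) := by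
    ext Z
    simp only [Set.mem_ofPred_eq, Set.mem_Iic, Pi.le_def (x := Z), le_iInf_iff, cauchy_le_iff,
      mul_le_iff_le_resid]
    exact forall_comm
  have hr : {Z | cauchy Z Y ≤ A} =
      Set.Iic (fun w => ⨅ u : List α, resid (Y u) (A (w ++ u))) := by
    ext Z
    simp only [Set.mem_ofPred_eq, Set.mem_Iic, Pi.le_def (x := Z), le_iInf_iff, cauchy_le_iff,
      ← mul_le_iff_le_resid, mul_comm (Z _)]
  constructor
  · rw [lres, hl, csSup_Iic]
  · rw [rres, hr, csSup_Iic]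
end
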